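/- Let ε > 0 and let p = p(n) satisfy n·p(n) → ∞ as n → ∞ and p(n) ≤ n^{-1/2-ε} for all large n. Then with high probability, the subgraph of a random graph G ∈ G(n,p) induced on the vertex set R(G) of its 2-core has a trivial automorphism group (its only graph automorphism is the identity). -/

import Mathlib

/-!
The 2-core `R` of a sparse random graph is rigid because a nontrivial automorphism forces one of
four configurations, each of which is unlikely by a first-moment computation. Write `M` for the set
of moved vertices, `F` for the fixed core vertices adjacent to `M`, and `A` for the vertices outside
`R` that hang (in trees) from `M`; fix a constant `J` with `2 * ε * J ≥ 3`.

* No two vertices have `J` common neighbours, as the expected codegree is about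
  `n * p ^ 2 ≤ n ^ (-2ε)` (`prob_manyCommon`). A fixed neighbour of a moved vertex `v` is also
  adjacent to the image of `v`, hence `|F| ≤ J * |M|`.
* Put `T = M ∪ A` and `W = T ∪ F`. Each vertex of `A` contributes an edge, each vertex of `M` has
  degree at least 2 in the core, and each vertex of `F` has at least two neighbours in `M`;
  counting gives `e(W) ≥ |W|`. By maximality of the core (`peel`, `hanging_closed`) no edge joins
  `T` to the complement of `W`. If `|W| ≤ n / 2`, this is unlikely: the expected number of such
  pairs with `|W| = u` is at most `(C * n * p * exp (-n * p / (2 * (J + 1)))) ^ u`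
  (`prob_nearlyIsolated`).
* If `|W| > n / 2`, then `|T|` is linear in `n`. Linear-sized sets span more than
  `(3 * J + 1) * n` edges (`prob_sparseSet`), whereas `A` spans at most `|A|`; so `M` is
  linear-sized and spans many edges.
* The automorphism then maps some `J * n` edges to as many other edges. For a given permutation this
  has probability at most `(C * (n * p ^ 2) ^ J) ^ n`, which beats the number `n!` of permutations
  (`prob_symmetricEdges`).

The deterministic implication is `bad_of_not_rigid`.
-/

open scoped Classical

/-- The number of edges of a graph on `Fin n`. -/
noncomputable def edgeCount {n : ℕ} (G : SimpleGraph (Fin n)) : ℕ := G.edgeFinset.card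

/-- The probability of the graph `G` under the Erdős–Rényi `G(n,p)` distribution. -/
noncomputable def gnpWeight (n : ℕ) (p : ℝ) (G : SimpleGraph (Fin n)) : ℝ :=
  p ^ edgeCount G * (1 - p) ^ (n.choose 2 - edgeCount G)

/-- The probability of a set `A` of graphs under the `G(n,p)` distribution. -/
noncomputable def gnpProb (n : ℕ) (p : ℝ) (A : Set (SimpleGraph (Fin n))) : ℝ :=
  ∑ G : SimpleGraph (Fin n), if G ∈ A then gnpWeight n p G else 0

/-- The vertex set of the 2-core of `G`: the largest set of vertices inducing a
subgraph of minimum degree at least 2 (the union of all such sets). -/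
def twoCore {V : Type*} (G : SimpleGraph V) : Set V :=
  ⋃₀ {S : Set V | ∀ v ∈ S, 2 ≤ ({u ∈ S | G.Adj v u} : Set V).ncard}

namespace TwoCoreRigid

open Finset

/-! ### Pairs and edges -/

/-- The pairs of distinct vertices, i.e. the potential edges. -/
noncomputable def pairs (n : ℕ) : Finset (Sym2 (Fin n)) := univ.filter fun e => ¬ e.IsDiag

/-- The edges of `G` as a finset of unordered pairs. -/
noncomputable def edges {n : ℕ} (G : SimpleGraph (Fin n)) : Finset (Sym2 (Fin n)) :=
  univ.filter fun e => e ∈ G.edgeSet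

/-- The edges of `G` with both ends in `S`. -/
noncomputable def inner {n : ℕ} (G : SimpleGraph (Fin n)) (S : Finset (Fin n)) :
    Finset (Sym2 (Fin n)) :=
  (edges G).filter fun e => ∀ v ∈ e, v ∈ S

/-- The potential edges with both ends in `S`. -/
noncomputable def pairsIn {n : ℕ} (S : Finset (Fin n)) : Finset (Sym2 (Fin n)) :=
  (pairs n).filter fun e => ∀ v ∈ e, v ∈ S

lemma mem_edges {n : ℕ} {G : SimpleGraph (Fin n)} {e : Sym2 (Fin n)} :
    e ∈ edges G ↔ e ∈ G.edgeSet := by simp [edges]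

lemma edges_subset {n : ℕ} (G : SimpleGraph (Fin n)) : edges G ⊆ pairs n := by
  intro e he
  simp only [edges, pairs, mem_filter, mem_univ, true_and] at *
  exact G.not_isDiag_of_mem_edgeSet he

lemma pairs_card (n : ℕ) : (pairs n).card = n.choose 2 := by
  have h := Sym2.card_subtype_not_diag (α := Fin n)
  rw [Fintype.card_fin, Fintype.card_subtype] at h
  rw [← h, pairs]

lemma pairsIn_card {n : ℕ} (S : Finset (Fin n)) : (pairsIn S).card = S.card.choose 2 := by
  have h := Sym2.card_image_offDiag S
  rw [← h]
  congr 1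
  ext e
  induction e using Sym2.ind with
  | _ x y =>
    simp only [pairsIn, pairs, mem_filter, mem_univ, true_and, Sym2.mem_iff, mem_image, mem_offDiag,
      Prod.exists, Sym2.mk_isDiag_iff, Function.uncurry_apply_pair, Sym2.eq_iff]
    constructor
    · rintro ⟨h1, h2⟩
      exact ⟨x, y, ⟨h2 x (.inl rfl), h2 y (.inr rfl), h1⟩, .inl ⟨rfl, rfl⟩⟩
    · rintro ⟨a, b, ⟨h1, h2, h3⟩, ⟨rfl, rfl⟩ | ⟨rfl, rfl⟩⟩
      · exact ⟨h3, by rintro v (rfl | rfl) <;> assumption⟩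
      · exact ⟨fun h => h3 h.symm, by rintro v (rfl | rfl) <;> assumption⟩

/-! ### Expectations and probabilities in `G(n,p)` -/

lemma edgeCount_eq {n : ℕ} (G : SimpleGraph (Fin n)) : edgeCount G = (edges G).card := by
  unfold edgeCount
  congr 1
  ext e
  simp [edges]

lemma edges_fromEdgeSet {n : ℕ} {t : Finset (Sym2 (Fin n))} (ht : t ⊆ pairs n) :
    edges (SimpleGraph.fromEdgeSet (t : Set (Sym2 (Fin n)))) = t := by
  ext e
  simp only [mem_edges, SimpleGraph.edgeSet_fromEdgeSet, Set.mem_sdiff, mem_coe]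
  constructor
  · exact fun h => h.1
  · intro h
    refine ⟨h, ?_⟩
    have := ht h
    simpa [pairs] using this

/-- Independence of the edges: the expectation of a product of one factor per potential edge
is the product of the expectations. -/
lemma expect_prod (n : ℕ) (p : ℝ) (a b : Sym2 (Fin n) → ℝ) :
    ∑ G : SimpleGraph (Fin n),
      gnpWeight n p G * ((∏ e ∈ edges G, a e) * ∏ e ∈ pairs n \ edges G, b e) =
    ∏ e ∈ pairs n, (p * a e + (1 - p) * b e) := by
  rw [prod_add]
  refine sum_bij' (fun G _ => edges G) (fun t _ => SimpleGraph.fromEdgeSet (t : Set (Sym2 (Fin n))))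
    ?_ ?_ ?_ ?_ ?_
  · intro G _
    exact mem_powerset.2 (edges_subset G)
  · simp
  · intro G _
    have : ((edges G : Finset _) : Set (Sym2 (Fin n))) = G.edgeSet := by
      ext e; simp [mem_edges]
    rw [this, SimpleGraph.fromEdgeSet_edgeSet]
  · intro t ht
    exact edges_fromEdgeSet (mem_powerset.1 ht)
  · intro G _
    rw [prod_mul_distrib, prod_mul_distrib, prod_const, prod_const,
      card_sdiff_of_subset (edges_subset G), pairs_card, gnpWeight, edgeCount_eq]
    ring

lemma weight_nonneg {n : ℕ} {p : ℝ} (h0 : 0 ≤ p) (h1 : p ≤ 1) (G : SimpleGraph (Fin n)) :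
    0 ≤ gnpWeight n p G :=
  mul_nonneg (pow_nonneg h0 _) (pow_nonneg (by linarith) _)

lemma weight_sum (n : ℕ) (p : ℝ) : ∑ G : SimpleGraph (Fin n), gnpWeight n p G = 1 := by
  have := expect_prod n p (fun _ => 1) (fun _ => 1)
  simpa using this

lemma prob_nonneg {n : ℕ} {p : ℝ} (h0 : 0 ≤ p) (h1 : p ≤ 1) (A : Set (SimpleGraph (Fin n))) :
    0 ≤ gnpProb n p A :=
  sum_nonneg fun G _ => by split_ifs; exacts [weight_nonneg h0 h1 G, le_rfl]

lemma prob_compl {n : ℕ} (p : ℝ) (A : Set (SimpleGraph (Fin n))) :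
    gnpProb n p A = 1 - gnpProb n p Aᶜ := by
  rw [eq_sub_iff_add_eq, gnpProb, gnpProb, ← sum_add_distrib, ← weight_sum n p]
  refine sum_congr rfl fun G _ => ?_
  by_cases h : G ∈ A <;> simp [h]

/-- The union bound. -/
lemma prob_union {n : ℕ} {p : ℝ} (h0 : 0 ≤ p) (h1 : p ≤ 1) {ι : Type*} (I : Finset ι)
    (A : Set (SimpleGraph (Fin n))) (B : ι → Set (SimpleGraph (Fin n)))
    (h : ∀ G ∈ A, ∃ i ∈ I, G ∈ B i) :
    gnpProb n p A ≤ ∑ i ∈ I, gnpProb n p (B i) := by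
  unfold gnpProb
  rw [sum_comm]
  refine sum_le_sum fun G _ => ?_
  have hn : ∀ i ∈ I, 0 ≤ if G ∈ B i then gnpWeight n p G else 0 := fun i _ => by
    split_ifs; exacts [weight_nonneg h0 h1 G, le_rfl]
  split_ifs with hG
  · obtain ⟨i, hi, hGi⟩ := h G hG
    refine le_trans ?_ (single_le_sum hn hi)
    rw [if_pos hGi]
  · exact sum_nonneg hn

/-- Markov's inequality for a product of nonnegative edge factors. -/
lemma prob_le_prod {n : ℕ} {p : ℝ} (h0 : 0 ≤ p) (h1 : p ≤ 1) (A : Set (SimpleGraph (Fin n)))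
    (a b : Sym2 (Fin n) → ℝ) (c : ℝ) (ha : ∀ e, 0 ≤ a e) (hb : ∀ e, 0 ≤ b e) (hc : 0 ≤ c)
    (h : ∀ G ∈ A, 1 ≤ c * ((∏ e ∈ edges G, a e) * ∏ e ∈ pairs n \ edges G, b e)) :
    gnpProb n p A ≤ c * ∏ e ∈ pairs n, (p * a e + (1 - p) * b e) := by
  rw [← expect_prod, mul_sum]
  refine sum_le_sum fun G _ => ?_
  have hw := weight_nonneg h0 h1 G
  have hp : 0 ≤ (∏ e ∈ edges G, a e) * ∏ e ∈ pairs n \ edges G, b e :=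
    mul_nonneg (prod_nonneg fun e _ => ha e) (prod_nonneg fun e _ => hb e)
  split_ifs with hG
  · nlinarith [h G hG]
  · positivity

lemma prod_ite_pow {n : ℕ} (X Y : Finset (Sym2 (Fin n))) (hX : X ⊆ pairs n) (hY : Y ⊆ pairs n)
    (hd : Disjoint X Y) (x y : ℝ) :
    ∏ e ∈ pairs n, (if e ∈ X then x else if e ∈ Y then y else 1) = x ^ X.card * y ^ Y.card := by
  rw [prod_ite, prod_const, prod_ite, prod_const, prod_const_one, mul_one]
  congr 2
  · congr 1; ext e; simp only [mem_filter]; exact ⟨fun h => h.2, fun h => ⟨hX h, h⟩⟩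
  · congr 1; ext e; simp only [mem_filter]
    exact ⟨fun h => h.2, fun h => ⟨⟨hY h, fun h' => disjoint_left.1 hd h' h⟩, h⟩⟩

lemma prob_present_absent {n : ℕ} {p : ℝ} (h0 : 0 ≤ p) (h1 : p ≤ 1) (X Y : Finset (Sym2 (Fin n)))
    (hX : X ⊆ pairs n) (hY : Y ⊆ pairs n) (hd : Disjoint X Y) :
    gnpProb n p {G | X ⊆ edges G ∧ Disjoint Y (edges G)} ≤ p ^ X.card * (1 - p) ^ Y.card := by
  refine (prob_le_prod h0 h1 _ (fun e => if e ∈ Y then 0 else 1) (fun e => if e ∈ X then 0 else 1) 1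
    (fun e => by split_ifs <;> norm_num) (fun e => by split_ifs <;> norm_num) zero_le_one ?_).trans
    (le_of_eq ?_)
  · rintro G ⟨hG1, hG2⟩
    rw [prod_eq_one, prod_eq_one]
    · norm_num
    · intro e he
      rw [if_neg fun h => (mem_sdiff.1 he).2 (hG1 h)]
    · intro e he
      rw [if_neg fun h => disjoint_left.1 hG2 h he]
  · rw [one_mul, ← prod_ite_pow X Y hX hY hd]
    refine prod_congr rfl fun e _ => ?_
    by_cases hx : e ∈ X
    · have hy : e ∉ Y := disjoint_left.1 hd hx
      simp [hx, hy]
    · by_cases hy : e ∈ Y <;> simp [hx, hy]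

lemma prob_present {n : ℕ} {p : ℝ} (h0 : 0 ≤ p) (h1 : p ≤ 1) (X : Finset (Sym2 (Fin n)))
    (hX : X ⊆ pairs n) : gnpProb n p {G | X ⊆ edges G} ≤ p ^ X.card := by
  simpa using prob_present_absent h0 h1 X ∅ hX (empty_subset _) (disjoint_empty_right _)

/-- A Chernoff bound for the lower tail of the number of edges of `G` inside a set of pairs `Z`. -/
lemma prob_few {n : ℕ} {p : ℝ} (h0 : 0 ≤ p) (h1 : p ≤ 1) (Z : Finset (Sym2 (Fin n)))
    (hZ : Z ⊆ pairs n) (k : ℕ) :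
    gnpProb n p {G | (Z ∩ edges G).card ≤ k} ≤ Real.exp (k - p * Z.card / 2) := by
  have he : Real.exp (-1) ≤ 1 / 2 := by
    rw [Real.exp_neg, inv_eq_one_div]
    have := Real.add_one_le_exp 1
    gcongr
    linarith
  refine (prob_le_prod h0 h1 _ (fun e => if e ∈ Z then Real.exp (-1) else 1) (fun e => 1)
    (Real.exp k) (fun e => by split_ifs <;> positivity) (fun e => zero_le_one) (Real.exp_nonneg _)
    ?_).trans ?_
  · intro G hG
    have hG' : ((Z ∩ edges G).card : ℝ) ≤ k := by exact_mod_cast hG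
    have : ∏ e ∈ edges G, (if e ∈ Z then Real.exp (-1) else 1) =
        Real.exp (-((Z ∩ edges G).card : ℝ)) := by
      rw [prod_ite, prod_const, prod_const_one, mul_one, ← Real.exp_nat_mul, filter_mem_eq_inter,
        inter_comm]
      congr 1; ring
    rw [this, prod_const_one, mul_one, ← Real.exp_add]
    exact Real.one_le_exp (by linarith)
  · have : ∏ e ∈ pairs n, (p * (if e ∈ Z then Real.exp (-1) else 1) + (1 - p) * 1) =
        (p * Real.exp (-1) + (1 - p)) ^ Z.card := by
      have := prod_ite_pow Z ∅ hZ (empty_subset _) (disjoint_empty_right _)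
        (p * Real.exp (-1) + (1 - p)) 1
      rw [one_pow, mul_one] at this
      rw [← this]
      refine prod_congr rfl fun e _ => ?_
      by_cases hz : e ∈ Z <;> simp [hz]
    rw [this, sub_eq_add_neg (k : ℝ), Real.exp_add]
    refine mul_le_mul_of_nonneg_left ?_ (Real.exp_nonneg _)
    have h2 : p * Real.exp (-1) + (1 - p) ≤ Real.exp (-(p / 2)) := by
      have := Real.add_one_le_exp (-(p / 2))
      nlinarith
    have h3 : 0 ≤ p * Real.exp (-1) + (1 - p) := by
      have := Real.exp_nonneg (-1)
      nlinarith [mul_nonneg h0 this]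
    refine (pow_le_pow_left₀ h3 h2 _).trans (le_of_eq ?_)
    rw [← Real.exp_nat_mul]
    congr 1; ring

/-! ### Counting edges inside vertex sets -/

/-- The number of neighbours of `v` in `S`. -/
noncomputable def degIn {n : ℕ} (G : SimpleGraph (Fin n)) (S : Finset (Fin n)) (v : Fin n) : ℕ :=
  (S.filter fun u => G.Adj v u).card

lemma mem_inner {n : ℕ} {G : SimpleGraph (Fin n)} {S : Finset (Fin n)} {x y : Fin n} :
    s(x, y) ∈ inner G S ↔ G.Adj x y ∧ x ∈ S ∧ y ∈ S := by
  simp [inner, mem_edges]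

lemma inner_mono {n : ℕ} (G : SimpleGraph (Fin n)) {S T : Finset (Fin n)} (h : S ⊆ T) :
    inner G S ⊆ inner G T := by
  intro e he
  simp only [inner, mem_filter] at *
  exact ⟨he.1, fun v hv => h (he.2 v hv)⟩

lemma inner_insert {n : ℕ} (G : SimpleGraph (Fin n)) {S : Finset (Fin n)} {v : Fin n} (hv : v ∉ S) :
    (inner G (insert v S)).card = (inner G S).card + degIn G S v := by
  have h1 : inner G (insert v S) =
      inner G S ∪ (S.filter fun u => G.Adj v u).image fun u => s(v, u) := by
    ext e
    induction e using Sym2.ind with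
    | _ x y =>
      simp only [mem_union, mem_inner, mem_insert, mem_image, mem_filter, Sym2.eq_iff]
      constructor
      · rintro ⟨h, rfl | hx, rfl | hy⟩
        · exact (h.ne rfl).elim
        · exact .inr ⟨y, ⟨hy, h⟩, .inl ⟨rfl, rfl⟩⟩
        · exact .inr ⟨x, ⟨hx, h.symm⟩, .inr ⟨rfl, rfl⟩⟩
        · exact .inl ⟨h, hx, hy⟩
      · rintro (⟨h, hx, hy⟩ | ⟨u, ⟨hu, h⟩, ⟨rfl, rfl⟩ | ⟨rfl, rfl⟩⟩)
        · exact ⟨h, .inr hx, .inr hy⟩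
        · exact ⟨h, .inl rfl, .inr hu⟩
        · exact ⟨h.symm, .inr hu, .inl rfl⟩
  rw [h1, card_union_of_disjoint, degIn, card_image_of_injOn]
  · intro a _ b _ hab
    exact Sym2.congr_right.1 hab
  · rw [disjoint_left]
    rintro e he he'
    obtain ⟨u, hu, rfl⟩ := mem_image.1 he'
    exact hv (mem_inner.1 he).2.1

lemma degIn_mono {n : ℕ} (G : SimpleGraph (Fin n)) {S T : Finset (Fin n)} (h : S ⊆ T) (v : Fin n) :
    degIn G S v ≤ degIn G T v :=
  card_le_card (filter_subset_filter _ h)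

lemma inner_union_ge {n : ℕ} (G : SimpleGraph (Fin n)) (S F : Finset (Fin n)) (h : Disjoint S F) :
    (inner G S).card + ∑ w ∈ F, degIn G S w ≤ (inner G (S ∪ F)).card := by
  induction F using Finset.induction_on with
  | empty => simp
  | insert w F hw ih =>
    have hwS : w ∉ S := fun h' => disjoint_left.1 h h' (mem_insert_self _ _)
    have := ih (h.mono_right (subset_insert _ _))
    rw [sum_insert hw, union_insert, inner_insert G (by simp [hw, hwS])]
    have := degIn_mono G (subset_union_left (s₁ := S) (s₂ := F)) w
    omega

lemma sum_degIn_self {n : ℕ} (G : SimpleGraph (Fin n)) (S : Finset (Fin n)) :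
    ∑ v ∈ S, degIn G S v = 2 * (inner G S).card := by
  induction S using Finset.induction_on with
  | empty =>
    have : inner G (∅ : Finset (Fin n)) = ∅ := by
      ext e
      induction e using Sym2.ind with
      | _ x y => simp [mem_inner]
    simp [this]
  | insert x S hx ih =>
    rw [sum_insert hx, inner_insert G hx]
    have h1 : degIn G (insert x S) x = degIn G S x := by
      rw [degIn, filter_insert, if_neg (G.irrefl)]; rfl
    have h2 : ∀ v ∈ S, degIn G (insert x S) v = degIn G S v + if G.Adj x v then 1 else 0 := by
      intro v _
      rw [degIn, filter_insert]
      by_cases h : G.Adj x v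
      · rw [if_pos h.symm, if_pos h, card_insert_of_notMem (by simp [hx])]; rfl
      · rw [if_neg fun h' => h h'.symm, if_neg h]; rfl
    rw [h1, sum_congr rfl h2, sum_add_distrib, ih, ← card_filter]
    change degIn G S x + (2 * (inner G S).card + degIn G S x) = _
    ring

lemma degIn_union {n : ℕ} (G : SimpleGraph (Fin n)) {S T : Finset (Fin n)} (h : Disjoint S T)
    (v : Fin n) : degIn G (S ∪ T) v = degIn G S v + degIn G T v := by
  rw [degIn, filter_union, card_union_of_disjoint (disjoint_filter_filter h)]; rfl

lemma sum_degIn_comm {n : ℕ} (G : SimpleGraph (Fin n)) (S T : Finset (Fin n)) :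
    ∑ v ∈ S, degIn G T v = ∑ w ∈ T, degIn G S w := by
  have := sum_card_bipartiteAbove_eq_sum_card_bipartiteBelow (s := S) (t := T) (fun a b => G.Adj a b)
  simp only [bipartiteAbove, bipartiteBelow] at this
  simp only [degIn, this, G.adj_comm]

/-! ### The configurations forced by an automorphism of the 2-core -/

/-- Two distinct vertices have at least `J` common neighbours. -/
def ManyCommon {n : ℕ} (J : ℕ) (G : SimpleGraph (Fin n)) : Prop :=
  ∃ x y, x ≠ y ∧ J ≤ (univ.filter fun z => G.Adj x z ∧ G.Adj y z).card

/-- A set `W` on at most half of the vertices spans at least `|W|` edges, although a positive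
proportion `T` of it has no neighbour outside `W`. -/
def NearlyIsolated {n : ℕ} (J : ℕ) (G : SimpleGraph (Fin n)) : Prop :=
  ∃ T W : Finset (Fin n), T ⊆ W ∧ T.Nonempty ∧ W.card ≤ (J + 1) * T.card ∧ 2 * W.card ≤ n ∧
    W.card ≤ (inner G W).card ∧ ∀ x ∈ T, ∀ y ∉ W, ¬ G.Adj x y

/-- A linear-sized set of vertices spans at most `L * n` edges. -/
def SparseSet {n : ℕ} (J L : ℕ) (G : SimpleGraph (Fin n)) : Prop :=
  ∃ A : Finset (Fin n), n ≤ 4 * (J + 1) * A.card ∧ (inner G A).card ≤ L * n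

/-- A permutation of the vertices maps some `k` edges to `k` other edges, disjointly. -/
def SymmetricEdges {n : ℕ} (k : ℕ) (G : SimpleGraph (Fin n)) : Prop :=
  ∃ (π : Equiv.Perm (Fin n)) (D : Finset (Sym2 (Fin n))), D.card = k ∧
    Disjoint D (D.image (Sym2.map π)) ∧ D ⊆ edges G ∧ D.image (Sym2.map π) ⊆ edges G

/-- A set of vertices outside the 2-core spans, together with its edges to the core, at most as
many edges as it has vertices: by maximality of the core, some vertex of it has at most one
neighbour in the union, and this vertex can be peeled off. -/
lemma peel {n : ℕ} (G : SimpleGraph (Fin n)) (R : Finset (Fin n))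
    (hmin : ∀ v ∈ R, 2 ≤ degIn G R v)
    (hmax : ∀ S : Finset (Fin n), (∀ v ∈ S, 2 ≤ degIn G S v) → S ⊆ R)
    (A : Finset (Fin n)) (hA : Disjoint R A) :
    (inner G (R ∪ A)).card ≤ (inner G R).card + A.card := by
  induction A using Finset.strongInduction with
  | H A ih =>
    rcases A.eq_empty_or_nonempty with rfl | ⟨a, ha⟩
    · simp
    have : ∃ v ∈ A, degIn G (R ∪ A) v ≤ 1 := by
      by_contra! hcon
      have hsub : R ∪ A ⊆ R := hmax _ fun v hv => by
        rcases mem_union.1 hv with h | h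
        · exact (hmin v h).trans (degIn_mono G subset_union_left v)
        · exact hcon v h
      exact disjoint_left.1 hA (hsub (mem_union_right _ ha)) ha
    obtain ⟨v, hv, hd⟩ := this
    have hvR : v ∉ R := fun h => disjoint_left.1 hA h hv
    have h1 := ih (A.erase v) (erase_ssubset hv) (hA.mono_right (erase_subset _ _))
    have h2 : R ∪ A = insert v (R ∪ A.erase v) := by
      rw [← union_insert, insert_erase hv]
    have h3 := inner_insert G (S := R ∪ A.erase v) (v := v) (by simp [hvR])
    have h4 := degIn_mono G (union_subset_union_right (s := R) (erase_subset v A)) v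
    have h5 := card_erase_add_one hv
    rw [h2, h3]
    omega

/-- The vertices outside the core that hang from `M`: a set `A` outside `R` which absorbs every
outer neighbour of `M ∪ A`, and which contributes at least one edge per vertex. -/
lemma exists_hanging {n : ℕ} (G : SimpleGraph (Fin n)) (R M : Finset (Fin n)) (hM : M ⊆ R) :
    ∃ A : Finset (Fin n), Disjoint R A ∧ (inner G M).card + A.card ≤ (inner G (M ∪ A)).card ∧
      ∀ x ∈ M ∪ A, ∀ y, G.Adj x y → y ∈ R ∪ A := by
  let Q : Finset (Finset (Fin n)) := univ.filter fun A =>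
    Disjoint R A ∧ (inner G M).card + A.card ≤ (inner G (M ∪ A)).card
  have hQ : Q.Nonempty := ⟨∅, by simp [Q]⟩
  obtain ⟨A, hA, hAmax⟩ := Q.exists_max_image (fun A => A.card) hQ
  obtain ⟨hdis, hcard⟩ := (mem_filter.1 hA).2
  refine ⟨A, hdis, hcard, ?_⟩
  intro x hx y hxy
  by_contra hy
  obtain ⟨hyR, hyA⟩ := not_or.1 (fun h => hy (mem_union.2 h))
  have hyM : y ∉ M := fun h => hyR (hM h)
  have hmem : insert y A ∈ Q := by
    refine mem_filter.2 ⟨mem_univ _, disjoint_insert_right.2 ⟨hyR, hdis⟩, ?_⟩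
    rw [card_insert_of_notMem hyA, union_insert, inner_insert G (by simp [hyM, hyA])]
    have : 0 < degIn G (M ∪ A) y := card_pos.2 ⟨x, mem_filter.2 ⟨hx, hxy.symm⟩⟩
    omega
  have := hAmax _ hmem
  rw [card_insert_of_notMem hyA] at this
  omega

/-- Hanging vertices have no neighbour in the core outside `M`, because the bound of `peel` is
already attained by their edges inside `M ∪ A`. -/
lemma hanging_closed {n : ℕ} (G : SimpleGraph (Fin n)) (R M A : Finset (Fin n)) (hM : M ⊆ R)
    (hdis : Disjoint R A) (hpeel : (inner G (R ∪ A)).card ≤ (inner G R).card + A.card)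
    (hcard : (inner G M).card + A.card ≤ (inner G (M ∪ A)).card)
    {x w : Fin n} (hx : x ∈ A) (hw : w ∈ R) (hwM : w ∉ M) : ¬ G.Adj x w := by
  intro hadj
  have hxR : x ∉ R := fun h => disjoint_left.1 hdis h hx
  have hwA : w ∉ A := fun h => disjoint_left.1 hdis hw h
  have hd : Disjoint (inner G R) (inner G (M ∪ A) \ inner G M) := by
    rw [disjoint_left]
    intro e
    induction e using Sym2.ind with
    | _ a b =>
      intro h1 h2
      rw [mem_sdiff, mem_inner, mem_inner, mem_union, mem_union] at h2
      obtain ⟨h, ha, hb⟩ := mem_inner.1 h1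
      obtain ⟨⟨_, ha', hb'⟩, h3⟩ := h2
      exact h3 ⟨h, ha'.resolve_right fun h => disjoint_left.1 hdis ha h,
        hb'.resolve_right fun h => disjoint_left.1 hdis hb h⟩
  have hn : s(x, w) ∉ inner G R ∪ (inner G (M ∪ A) \ inner G M) := by
    simp only [mem_union, mem_sdiff, mem_inner]
    tauto
  have hsub : insert s(x, w) (inner G R ∪ (inner G (M ∪ A) \ inner G M)) ⊆ inner G (R ∪ A) := by
    refine insert_subset (mem_inner.2 ⟨hadj, by simp [hx], by simp [hw]⟩) (union_subset ?_ ?_)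
    · exact inner_mono G subset_union_left
    · exact sdiff_subset.trans (inner_mono G (union_subset_union_left hM))
  have h1 := card_le_card hsub
  rw [card_insert_of_notMem hn, card_union_of_disjoint hd,
    card_sdiff_of_subset (inner_mono G subset_union_left)] at h1
  omega

/-- A permutation without fixed points on `M` that preserves adjacency inside `M` moves many
edges of `G[M]` to disjoint edges: at most `n` edges are fixed, and a maximal set `D` of edges
disjoint from its image has the property that every non-fixed edge is in `D`, in its image or in
its preimage. -/
lemma symmetricEdges_of_perm {n : ℕ} (G : SimpleGraph (Fin n)) (π : Equiv.Perm (Fin n))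
    (M : Finset (Fin n)) (hM : ∀ v ∈ M, π v ≠ v) (hMM : ∀ v ∈ M, π v ∈ M)
    (hadj : ∀ x ∈ M, ∀ y ∈ M, G.Adj x y → G.Adj (π x) (π y)) (k : ℕ)
    (hk : 3 * k + n ≤ (inner G M).card) : SymmetricEdges k G := by
  set g : Sym2 (Fin n) → Sym2 (Fin n) := Sym2.map π with hg
  have hginj : Function.Injective g := Sym2.map.injective π.injective
  set E := (inner G M).filter fun e => g e ≠ e with hE
  have hgE : ∀ e ∈ inner G M, g e ∈ inner G M := by
    intro e
    induction e using Sym2.ind with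
    | _ x y =>
      intro h
      rw [mem_inner] at h
      rw [hg, Sym2.map_mk, mem_inner]
      exact ⟨hadj _ h.2.1 _ h.2.2 h.1, hMM _ h.2.1, hMM _ h.2.2⟩
  have hfix : ((inner G M).filter fun e => ¬ g e ≠ e).card ≤ n := by
    have : ((inner G M).filter fun e => ¬ g e ≠ e) ⊆ univ.image fun x => s(x, π x) := by
      intro e
      induction e using Sym2.ind with
      | _ x y =>
        intro h
        obtain ⟨h1, h2⟩ := mem_filter.1 h
        rw [not_not, hg, Sym2.map_mk, Sym2.eq_iff] at h2
        rcases h2 with h2 | h2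
        · exact (hM x (mem_inner.1 h1).2.1 h2.1).elim
        · exact mem_image.2 ⟨x, mem_univ _, by rw [h2.1]⟩
    refine (card_le_card this).trans (card_image_le.trans ?_)
    simp
  have hEcard : 3 * k ≤ E.card := by
    have : E.card + ((inner G M).filter fun e => ¬ g e ≠ e).card = (inner G M).card :=
      card_filter_add_card_filter_not (s := inner G M) (fun e => g e ≠ e)
    omega
  let Q := E.powerset.filter fun D => Disjoint D (D.image g)
  have hQ : Q.Nonempty := ⟨∅, by simp [Q]⟩
  obtain ⟨D, hD, hDmax⟩ := Q.exists_max_image (fun D => D.card) hQ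
  obtain ⟨hDE, hDdis⟩ := mem_filter.1 hD
  rw [mem_powerset] at hDE
  have hcover : E ⊆ D ∪ (D.image g ∪ D.preimage g hginj.injOn) := by
    intro e he
    by_contra hcon
    simp only [mem_union, mem_preimage, not_or] at hcon
    obtain ⟨h1, h2, h3⟩ := hcon
    have hne := (mem_filter.1 he).2
    have : insert e D ∈ Q := by
      refine mem_filter.2 ⟨mem_powerset.2 (insert_subset he hDE), ?_⟩
      rw [image_insert, disjoint_insert_left, disjoint_insert_right]
      refine ⟨?_, h3, hDdis⟩
      rw [mem_insert, not_or]
      exact ⟨fun h => hne h.symm, h2⟩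
    have := hDmax _ this
    rw [card_insert_of_notMem h1] at this
    omega
  have hDk : k ≤ D.card := by
    have h1 := card_le_card hcover
    have h2 := card_union_le D (D.image g ∪ D.preimage g hginj.injOn)
    have h3 := card_union_le (D.image g) (D.preimage g hginj.injOn)
    have h4 : (D.image g).card ≤ D.card := card_image_le
    have h5 : (D.preimage g hginj.injOn).card ≤ D.card := by
      rw [← card_image_of_injective _ hginj]
      refine card_le_card fun e he => ?_
      obtain ⟨e', he', rfl⟩ := mem_image.1 he
      exact mem_preimage.1 he'
    omega
  obtain ⟨D', hD', hD'k⟩ := exists_subset_card_eq hDk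
  have hin : ∀ e ∈ D', e ∈ inner G M := fun e he => (mem_filter.1 (hDE (hD' he))).1
  refine ⟨π, D', hD'k, hDdis.mono hD' (image_subset_image hD'), ?_, ?_⟩
  · exact fun e he => (mem_filter.1 (hin e he)).1
  · intro e he
    obtain ⟨e', he', rfl⟩ := mem_image.1 he
    exact (mem_filter.1 (hgE e' (hin e' he'))).1

/-- The deterministic part, for a permutation `π` of all vertices that restricts to an
automorphism of the core `R` and fixes everything else. -/
lemma bad_of_perm {n : ℕ} (G : SimpleGraph (Fin n)) (J : ℕ) (R : Finset (Fin n))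
    (hmin : ∀ v ∈ R, 2 ≤ degIn G R v)
    (hmax : ∀ S : Finset (Fin n), (∀ v ∈ S, 2 ≤ degIn G S v) → S ⊆ R)
    (π : Equiv.Perm (Fin n)) (hout : ∀ v ∉ R, π v = v) (hne : ∃ v, π v ≠ v)
    (hadj : ∀ x ∈ R, ∀ y ∈ R, G.Adj x y → G.Adj (π x) (π y)) :
    ManyCommon J G ∨ NearlyIsolated J G ∨ SparseSet J (3 * J + 1) G ∨
      SymmetricEdges (J * n) G := by
  by_contra! hcon
  obtain ⟨hc, hi, hs, hsym⟩ := hcon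
  set M : Finset (Fin n) := univ.filter fun v => π v ≠ v with hMdef
  have memM : ∀ v, v ∈ M ↔ π v ≠ v := by simp [hMdef]
  have hMR : M ⊆ R := fun v hv => by
    by_contra h
    exact (memM v).1 hv (hout v h)
  have hMne : M.Nonempty := hne.imp fun v hv => (memM v).2 hv
  have hMM : ∀ v ∈ M, π v ∈ M := fun v hv => (memM _).2 fun h => (memM v).1 hv (π.injective h)
  obtain ⟨A, hRA, hAcard, hclosed⟩ := exists_hanging G R M hMR
  have hpeel := peel G R hmin hmax A hRA
  set F := (R \ M).filter fun w => ∃ v ∈ M, G.Adj v w with hF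
  have hMA : Disjoint M A := hRA.mono_left hMR
  have hMF : Disjoint M F :=
    disjoint_left.2 fun v hv hv' => (mem_sdiff.1 (mem_filter.1 hv').1).2 hv
  have hFR : F ⊆ R := fun w hw => (mem_sdiff.1 (mem_filter.1 hw).1).1
  have hTF : Disjoint (M ∪ A) F :=
    disjoint_union_left.2 ⟨hMF, (hRA.mono_left hFR).symm⟩
  have hFfix : ∀ w ∈ F, π w = w := fun w hw => by
    by_contra h
    exact disjoint_left.1 hMF ((memM w).2 h) hw
  -- A fixed neighbour of a moved vertex `v` is a common neighbour of `v` and `π v`.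
  have hcommon : ∀ v ∈ M, ∀ w ∈ F, G.Adj v w → G.Adj (π v) w := fun v hv w hw h => by
    have := hadj v (hMR hv) w (hFR hw) h
    rwa [hFfix w hw] at this
  have hFdeg : ∀ w ∈ F, 2 ≤ degIn G M w := by
    intro w hw
    obtain ⟨v, hv, hvw⟩ := (mem_filter.1 hw).2
    have hsub : ({v, π v} : Finset (Fin n)) ⊆ M.filter fun u => G.Adj w u := by
      intro u hu
      rcases mem_insert.1 hu with rfl | hu
      · exact mem_filter.2 ⟨hv, hvw.symm⟩
      · rw [mem_singleton.1 hu]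
        exact mem_filter.2 ⟨hMM v hv, (hcommon v hv w hw hvw).symm⟩
    have := card_le_card hsub
    rwa [card_pair ((memM v).1 hv).symm] at this
  have hFcard : F.card ≤ J * M.card := by
    have hsub : F ⊆ M.biUnion fun v => univ.filter fun z => G.Adj v z ∧ G.Adj (π v) z := by
      intro w hw
      obtain ⟨v, hv, hvw⟩ := (mem_filter.1 hw).2
      exact mem_biUnion.2 ⟨v, hv, mem_filter.2 ⟨mem_univ _, hvw, hcommon v hv w hw hvw⟩⟩
    refine (card_le_card hsub).trans ((card_biUnion_le_card_mul _ _ J ?_).trans (by rw [mul_comm]))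
    intro v hv
    by_contra! h
    exact hc ⟨v, π v, ((memM v).1 hv).symm, h.le⟩
  have hf : 2 * F.card ≤ ∑ w ∈ F, degIn G M w := by
    rw [mul_comm, ← smul_eq_mul]
    exact card_nsmul_le_sum _ _ _ hFdeg
  have hdeg : 2 * M.card ≤ 2 * (inner G M).card + ∑ w ∈ F, degIn G M w := by
    rw [← sum_degIn_self, ← sum_degIn_comm G M F, ← sum_add_distrib, mul_comm, ← smul_eq_mul]
    refine card_nsmul_le_sum _ _ _ fun v hv => ?_
    rw [← degIn_union G hMF]
    refine (hmin v (hMR hv)).trans (card_le_card fun u hu => ?_)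
    obtain ⟨hu1, hu2⟩ := mem_filter.1 hu
    refine mem_filter.2 ⟨mem_union.2 ?_, hu2⟩
    by_cases huM : u ∈ M
    · exact .inl huM
    · exact .inr (mem_filter.2 ⟨mem_sdiff.2 ⟨hu1, huM⟩, v, hv, hu2⟩)
  have hW := inner_union_ge G (M ∪ A) F hTF
  have hW' : ∑ w ∈ F, degIn G M w ≤ ∑ w ∈ F, degIn G (M ∪ A) w :=
    sum_le_sum fun w _ => degIn_mono G subset_union_left w
  have hTcard : (M ∪ A).card = M.card + A.card := card_union_of_disjoint hMA
  have hWcard : (M ∪ A ∪ F).card = M.card + A.card + F.card := by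
    rw [card_union_of_disjoint hTF, hTcard]
  have hWT : (M ∪ A ∪ F).card ≤ (J + 1) * (M ∪ A).card := by
    rw [hWcard, hTcard]
    nlinarith [Nat.zero_le (J * A.card)]
  by_cases hsize : 2 * (M ∪ A ∪ F).card ≤ n
  · refine hi ⟨M ∪ A, M ∪ A ∪ F, subset_union_left, hMne.mono subset_union_left, hWT, hsize, ?_, ?_⟩
    · rw [hWcard]
      omega
    · intro x hx y hy hxy
      rcases mem_union.1 (hclosed x hx y hxy) with h | h
      · have hyM : y ∉ M := fun h' => hy (by simp [h'])
        rcases mem_union.1 hx with hx | hx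
        · exact hy (mem_union_right _ (mem_filter.2 ⟨mem_sdiff.2 ⟨h, hyM⟩, x, hx, hxy⟩))
        · exact hanging_closed G R M A hMR hRA hpeel hAcard hx h hyM hxy
      · exact hy (by simp [h])
  · -- Here `M ∪ A` is large; `A` is not, because it spans at most `|A|` edges.
    have hAn : A.card ≤ n := by simpa using card_le_univ A
    have hAsmall : 4 * (J + 1) * A.card < n := by
      by_contra! h
      refine hs ⟨A, h, ?_⟩
      have h1 : (inner G A).card + (inner G R).card ≤ (inner G (R ∪ A)).card := by
        rw [← card_union_of_disjoint]
        · exact card_le_card (union_subset (inner_mono G subset_union_right)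
            (inner_mono G subset_union_left))
        · rw [disjoint_left]
          intro e
          induction e using Sym2.ind with
          | _ a b =>
            intro ha hb
            exact disjoint_left.1 hRA (mem_inner.1 hb).2.1 (mem_inner.1 ha).2.1
      nlinarith [Nat.zero_le (J * n)]
    have hMlarge : n ≤ 4 * (J + 1) * M.card := by
      rw [hTcard] at hWT
      nlinarith
    have hMe : (3 * J + 1) * n < (inner G M).card := by
      by_contra! h
      exact hs ⟨M, hMlarge, h⟩
    refine hsym (symmetricEdges_of_perm G π M (fun v hv => (memM v).1 hv) hMM
      (fun x hx y hy => hadj x (hMR hx) y (hMR hy)) _ ?_)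
    nlinarith

lemma ncard_degIn {n : ℕ} (G : SimpleGraph (Fin n)) (S : Set (Fin n)) (v : Fin n) :
    ({u ∈ S | G.Adj v u} : Set (Fin n)).ncard = degIn G S.toFinset v := by
  rw [degIn, ← Set.ncard_coe_finset]
  congr 1
  ext u
  simp

/-- A nontrivial automorphism of the 2-core forces one of four unlikely configurations. -/
lemma bad_of_not_rigid {n : ℕ} (G : SimpleGraph (Fin n)) (J : ℕ)
    (h : ¬ ∀ f : G.induce (twoCore G) ≃g G.induce (twoCore G), ∀ v, f v = v) :
    ManyCommon J G ∨ NearlyIsolated J G ∨ SparseSet J (3 * J + 1) G ∨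
      SymmetricEdges (J * n) G := by
  push Not at h
  obtain ⟨f, v, hv⟩ := h
  have hmin : ∀ v ∈ (twoCore G).toFinset, 2 ≤ degIn G (twoCore G).toFinset v := by
    intro v hv
    rw [← ncard_degIn]
    obtain ⟨S, hS, hvS⟩ := Set.mem_toFinset.1 hv
    refine (hS v hvS).trans (Set.ncard_le_ncard ?_ (Set.toFinite _))
    exact fun u hu => ⟨⟨S, hS, hu.1⟩, hu.2⟩
  have hmax : ∀ S : Finset (Fin n), (∀ v ∈ S, 2 ≤ degIn G S v) → S ⊆ (twoCore G).toFinset := by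
    intro S hS v hv
    refine Set.mem_toFinset.2 ⟨S, fun v hv => ?_, hv⟩
    rw [ncard_degIn, toFinset_coe]
    exact hS v hv
  let π : Equiv.Perm (Fin n) := Equiv.Perm.ofSubtype (p := (· ∈ twoCore G)) f.toEquiv
  have hπ : ∀ x (hx : x ∈ twoCore G), π x = f ⟨x, hx⟩ := fun x hx =>
    Equiv.Perm.ofSubtype_apply_of_mem (p := (· ∈ twoCore G)) _ hx
  refine bad_of_perm G J (twoCore G).toFinset hmin hmax π ?_ ⟨v, ?_⟩ ?_
  · intro x hx
    exact Equiv.Perm.ofSubtype_apply_of_not_mem (p := (· ∈ twoCore G)) _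
      fun h => hx (Set.mem_toFinset.2 h)
  · rw [hπ v v.2]
    exact fun h => hv (Subtype.ext h)
  · intro x hx y hy hxy
    rw [hπ x (Set.mem_toFinset.1 hx), hπ y (Set.mem_toFinset.1 hy)]
    have := f.map_rel_iff (a := ⟨x, Set.mem_toFinset.1 hx⟩) (b := ⟨y, Set.mem_toFinset.1 hy⟩)
    exact this.2 hxy

/-! ### First-moment bounds -/

lemma mk_mem_pairs {n : ℕ} {x y : Fin n} : s(x, y) ∈ pairs n ↔ x ≠ y := by
  simp [pairs]

lemma prob_manyCommon {n : ℕ} {p : ℝ} (h0 : 0 ≤ p) (h1 : p ≤ 1) (J : ℕ) :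
    gnpProb n p {G | ManyCommon J G} ≤ (n : ℝ) ^ 2 * (n * p ^ 2) ^ J := by
  let I : Finset ((Fin n × Fin n) × Finset (Fin n)) :=
    (univ ×ˢ powersetCard J univ).filter fun i => i.1.1 ≠ i.1.2 ∧ i.1.1 ∉ i.2 ∧ i.1.2 ∉ i.2
  let X : (Fin n × Fin n) × Finset (Fin n) → Finset (Sym2 (Fin n)) := fun i =>
    (i.2.image fun z => s(i.1.1, z)) ∪ i.2.image fun z => s(i.1.2, z)
  have hI : (I.card : ℝ) ≤ (n : ℝ) ^ 2 * n ^ J := by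
    have h2 : I.card ≤ n * n * n.choose J := by
      refine (card_filter_le _ _).trans (le_of_eq ?_)
      rw [card_product, card_powersetCard, card_univ, card_univ, Fintype.card_prod, Fintype.card_fin]
    have h3 : n.choose J ≤ n ^ J := Nat.choose_le_pow n J
    have : I.card ≤ n ^ 2 * n ^ J := by nlinarith [Nat.zero_le (n * n)]
    exact_mod_cast this
  have hterm : ∀ i ∈ I, gnpProb n p {G | X i ⊆ edges G} ≤ p ^ (2 * J) := by
    rintro ⟨⟨x, y⟩, Z⟩ hi
    obtain ⟨hi1, hxy, hx, hy⟩ := mem_filter.1 hi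
    simp only at hxy hx hy
    have hZ : Z.card = J := (mem_powersetCard.1 (mem_product.1 hi1).2).2
    refine (prob_present h0 h1 _ ?_).trans (le_of_eq ?_)
    · refine union_subset ?_ ?_ <;> intro e he <;> obtain ⟨z, hz, rfl⟩ := mem_image.1 he
      · exact mk_mem_pairs.2 fun (h : x = z) => hx (h ▸ hz)
      · exact mk_mem_pairs.2 fun (h : y = z) => hy (h ▸ hz)
    · congr 1
      rw [card_union_of_disjoint, card_image_of_injOn, card_image_of_injOn, hZ]
      · ring
      · exact fun a _ b _ hab => Sym2.congr_right.1 hab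
      · exact fun a _ b _ hab => Sym2.congr_right.1 hab
      · rw [disjoint_left]
        rintro e he he'
        obtain ⟨z, hz, rfl⟩ := mem_image.1 he
        obtain ⟨w, hw, hh⟩ := mem_image.1 he'
        rcases Sym2.eq_iff.1 hh with h | h
        · exact hxy h.1.symm
        · have hwx : w = x := h.2
          exact hx (hwx ▸ hw)
  refine (prob_union h0 h1 I _ (fun i => {G | X i ⊆ edges G}) ?_).trans
    ((sum_le_card_nsmul _ _ _ hterm).trans ?_)
  · rintro G ⟨x, y, hxy, hJ⟩
    obtain ⟨Z, hZ, hZJ⟩ := exists_subset_card_eq hJ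
    have hadj : ∀ z ∈ Z, G.Adj x z ∧ G.Adj y z := fun z hz => (mem_filter.1 (hZ hz)).2
    refine ⟨⟨⟨x, y⟩, Z⟩, mem_filter.2 ⟨mem_product.2 ⟨mem_univ _, mem_powersetCard.2
      ⟨subset_univ _, hZJ⟩⟩, hxy, fun h => (hadj x h).1.ne rfl, fun h => (hadj y h).2.ne rfl⟩, ?_⟩
    refine union_subset ?_ ?_ <;> intro e he <;> obtain ⟨z, hz, rfl⟩ := mem_image.1 he
    · exact mem_edges.2 (hadj z hz).1
    · exact mem_edges.2 (hadj z hz).2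
  · rw [nsmul_eq_mul, mul_pow, ← pow_mul, ← mul_assoc]
    exact mul_le_mul_of_nonneg_right hI (by positivity)

lemma prob_symmetricEdges {n : ℕ} {p : ℝ} (h0 : 0 ≤ p) (h1 : p ≤ 1) (J : ℕ) :
    gnpProb n p {G | SymmetricEdges (J * n) G} ≤ (Real.exp 1 * n * (n * p ^ 2) ^ J) ^ n := by
  set k := J * n with hk
  let I : Finset (Equiv.Perm (Fin n) × Finset (Sym2 (Fin n))) :=
    (univ ×ˢ powersetCard k (pairs n)).filter fun i =>
      Disjoint i.2 (i.2.image (Sym2.map i.1)) ∧ i.2.image (Sym2.map i.1) ⊆ pairs n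
  have hI : (I.card : ℝ) ≤ (n : ℝ) ^ n * ((n : ℝ) ^ k * Real.exp n) := by
    have h2 : I.card ≤ n.factorial * (n.choose 2).choose k := by
      refine (card_filter_le _ _).trans (le_of_eq ?_)
      rw [card_product, card_powersetCard, card_univ, Fintype.card_perm, Fintype.card_fin,
        pairs_card]
    have h3 : (((n.choose 2).choose k : ℕ) : ℝ) ≤ (n : ℝ) ^ k * Real.exp n := by
      have h4 : ((n.choose 2).choose k : ℝ) ≤ ((n ^ 2 : ℕ) : ℝ) ^ k / k.factorial := by
        refine le_trans ?_ (Nat.choose_le_pow_div k (n ^ 2))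
        exact_mod_cast Nat.choose_le_choose k (Nat.choose_le_pow n 2)
      have h5 := Real.pow_div_factorial_le_exp (n : ℝ) (Nat.cast_nonneg n) k
      refine h4.trans ?_
      push_cast
      rw [← pow_mul, mul_comm 2 k, pow_mul, sq, mul_div_assoc]
      gcongr
    have h6 : (n.factorial : ℝ) ≤ (n : ℝ) ^ n := by exact_mod_cast Nat.factorial_le_pow n
    calc (I.card : ℝ) ≤ n.factorial * ((n.choose 2).choose k : ℕ) := by exact_mod_cast h2
      _ ≤ _ := by gcongr
  have hterm : ∀ i ∈ I, gnpProb n p {G | i.2 ∪ i.2.image (Sym2.map i.1) ⊆ edges G} ≤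
      p ^ (2 * k) := by
    rintro ⟨π, D⟩ hi
    obtain ⟨hi1, hd, hsub⟩ := mem_filter.1 hi
    simp only at hd hsub
    obtain ⟨hDp, hD⟩ := mem_powersetCard.1 (mem_product.1 hi1).2
    refine (prob_present h0 h1 _ (union_subset hDp hsub)).trans (le_of_eq ?_)
    rw [card_union_of_disjoint hd, card_image_of_injective _ (Sym2.map.injective π.injective), hD]
    congr 1; ring
  refine (prob_union h0 h1 I _
    (fun i => {G | i.2 ∪ i.2.image (Sym2.map i.1) ⊆ edges G}) ?_).trans
    ((sum_le_card_nsmul _ _ _ hterm).trans ?_)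
  · rintro G ⟨π, D, hD, hd, hs1, hs2⟩
    exact ⟨⟨π, D⟩, mem_filter.2 ⟨mem_product.2 ⟨mem_univ _, mem_powersetCard.2
      ⟨hs1.trans (edges_subset G), hD⟩⟩, hd, hs2.trans (edges_subset G)⟩, union_subset hs1 hs2⟩
  · rw [nsmul_eq_mul]
    refine (mul_le_mul_of_nonneg_right hI (by positivity)).trans (le_of_eq ?_)
    have he : Real.exp n = Real.exp 1 ^ n := by rw [← Real.exp_nat_mul, mul_one]
    rw [he, hk, mul_pow, mul_pow, ← pow_mul, mul_pow, ← pow_mul]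
    ring

lemma prob_sparseSet {n : ℕ} {p : ℝ} (h0 : 0 ≤ p) (h1 : p ≤ 1) (J L : ℕ)
    (hn : 4 * (J + 1) < n) :
    gnpProb n p {G | SparseSet J L G} ≤
      Real.exp (n * (1 + L - n * p / (128 * (J + 1) ^ 2))) := by
  let I : Finset (Finset (Fin n)) := univ.filter fun A => n ≤ 4 * (J + 1) * A.card
  have hI : (I.card : ℝ) ≤ Real.exp n := by
    have h2 : I.card ≤ 2 ^ n := by
      refine (card_filter_le _ _).trans (le_of_eq ?_)
      rw [card_univ, Fintype.card_finset, Fintype.card_fin]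
    have h3 : (2 : ℝ) ≤ Real.exp 1 := by
      have := Real.add_one_le_exp 1
      linarith
    calc (I.card : ℝ) ≤ 2 ^ n := by exact_mod_cast h2
      _ ≤ Real.exp 1 ^ n := by gcongr
      _ = Real.exp n := by rw [← Real.exp_nat_mul, mul_one]
  have hterm : ∀ A ∈ I, gnpProb n p {G | (pairsIn A ∩ edges G).card ≤ L * n} ≤
      Real.exp (L * n - n * (n * p / (128 * (J + 1) ^ 2))) := by
    intro A hA
    have hA' : n ≤ 4 * (J + 1) * A.card := (mem_filter.1 hA).2
    have ha2 : 2 ≤ A.card := by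
      by_contra! h
      have : A.card ≤ 1 := by omega
      nlinarith
    refine (prob_few h0 h1 (pairsIn A) (filter_subset _ _) _).trans (Real.exp_le_exp.2 ?_)
    rw [pairsIn_card, Nat.cast_choose_two]
    have hAr : (n : ℝ) ≤ 4 * (J + 1) * A.card := by exact_mod_cast hA'
    have ha2r : (2 : ℝ) ≤ A.card := by exact_mod_cast ha2
    have hq : (A.card : ℝ) ^ 2 / 4 ≤ A.card * (A.card - 1) / 2 := by nlinarith
    have hq2 : (n : ℝ) ^ 2 / (64 * (J + 1) ^ 2) ≤ (A.card : ℝ) ^ 2 / 4 := by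
      rw [div_le_div_iff₀ (by positivity) (by norm_num)]
      have := pow_le_pow_left₀ (Nat.cast_nonneg n) hAr 2
      nlinarith
    have hq3 := mul_le_mul_of_nonneg_left (hq2.trans hq) h0
    have : (n : ℝ) * (n * p / (128 * (J + 1) ^ 2)) = p * (n ^ 2 / (64 * (J + 1) ^ 2)) / 2 := by
      field_simp; ring
    rw [this]
    push_cast
    linarith
  refine (prob_union h0 h1 I _ (fun A => {G | (pairsIn A ∩ edges G).card ≤ L * n}) ?_).trans
    ((sum_le_card_nsmul _ _ _ hterm).trans ?_)
  · rintro G ⟨A, hA, hAL⟩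
    refine ⟨A, mem_filter.2 ⟨mem_univ _, hA⟩, le_trans (card_le_card ?_) hAL⟩
    intro e he
    obtain ⟨he1, he2⟩ := mem_inter.1 he
    exact mem_filter.2 ⟨he2, (mem_filter.1 he1).2⟩
  · rw [nsmul_eq_mul]
    refine (mul_le_mul_of_nonneg_right hI (Real.exp_nonneg _)).trans (le_of_eq ?_)
    rw [← Real.exp_add]
    congr 1; ring

/-- The first-moment bound for a single set `W` in `NearlyIsolated`. -/
lemma prob_nearlyIsolated_single {n : ℕ} {p : ℝ} (h0 : 0 ≤ p) (h1 : p ≤ 1) (J : ℕ)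
    (W : Finset (Fin n)) (hW : 2 * W.card ≤ n) :
    gnpProb n p {G | ∃ T ⊆ W, W.card ≤ (J + 1) * T.card ∧ W.card ≤ (inner G W).card ∧
        ∀ x ∈ T, ∀ y ∉ W, ¬ G.Adj x y} ≤
      (2 * Real.exp 1 * W.card * p * Real.exp (-(n * p / (2 * (J + 1))))) ^ W.card := by
  set u := W.card with hu
  let I : Finset (Finset (Fin n) × Finset (Sym2 (Fin n))) :=
    (W.powerset ×ˢ powersetCard u (pairsIn W)).filter fun i => u ≤ (J + 1) * i.1.card
  let Y : Finset (Fin n) → Finset (Sym2 (Fin n)) := fun T => (T ×ˢ Wᶜ).image fun q => s(q.1, q.2)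
  have hI : (I.card : ℝ) ≤ 2 ^ u * ((u : ℝ) ^ u * Real.exp 1 ^ u) := by
    have h2 : I.card ≤ 2 ^ u * (u.choose 2).choose u := by
      refine (card_filter_le _ _).trans (le_of_eq ?_)
      rw [card_product, card_powersetCard, card_powerset, pairsIn_card]
    have h3 : (((u.choose 2).choose u : ℕ) : ℝ) ≤ (u : ℝ) ^ u * Real.exp 1 ^ u := by
      have h4 : ((u.choose 2).choose u : ℝ) ≤ ((u ^ 2 : ℕ) : ℝ) ^ u / u.factorial := by
        refine le_trans ?_ (Nat.choose_le_pow_div u (u ^ 2))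
        exact_mod_cast Nat.choose_le_choose u (Nat.choose_le_pow u 2)
      have h5 := Real.pow_div_factorial_le_exp (u : ℝ) (Nat.cast_nonneg u) u
      have he : Real.exp u = Real.exp 1 ^ u := by rw [← Real.exp_nat_mul, mul_one]
      rw [he] at h5
      refine h4.trans ?_
      push_cast
      rw [sq, mul_pow, mul_div_assoc]
      gcongr
    calc (I.card : ℝ) ≤ 2 ^ u * ((u.choose 2).choose u : ℕ) := by exact_mod_cast h2
      _ ≤ _ := by gcongr
  have hterm : ∀ i ∈ I, gnpProb n p {G | i.2 ⊆ edges G ∧ Disjoint (Y i.1) (edges G)} ≤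
      p ^ u * Real.exp (-(n * p / (2 * (J + 1)))) ^ u := by
    rintro ⟨T, X⟩ hi
    obtain ⟨hi1, hT⟩ := mem_filter.1 hi
    simp only at hT
    have hTW : T ⊆ W := mem_powerset.1 (mem_product.1 hi1).1
    obtain ⟨hXp, hX⟩ := mem_powersetCard.1 (mem_product.1 hi1).2
    have hYp : Y T ⊆ pairs n := by
      intro e he
      obtain ⟨q, hq, rfl⟩ := mem_image.1 he
      obtain ⟨hq1, hq2⟩ := mem_product.1 hq
      exact mk_mem_pairs.2 fun h => (mem_compl.1 hq2) (h ▸ hTW hq1)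
    have hdis : Disjoint X (Y T) := by
      rw [disjoint_left]
      intro e he he'
      obtain ⟨q, hq, rfl⟩ := mem_image.1 he'
      exact (mem_compl.1 (mem_product.1 hq).2) ((mem_filter.1 (hXp he)).2 q.2 (by simp))
    have hYcard : (Y T).card = T.card * (n - u) := by
      rw [card_image_of_injOn, card_product, card_compl, Fintype.card_fin]
      rintro ⟨a, b⟩ hab ⟨c, d⟩ hcd hh
      obtain ⟨ha, hb⟩ := mem_product.1 (mem_coe.1 hab)
      obtain ⟨hc, hd⟩ := mem_product.1 (mem_coe.1 hcd)
      rcases Sym2.eq_iff.1 hh with h | h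
      · exact Prod.ext h.1 h.2
      · have hcb : c = b := h.2.symm
        exact ((mem_compl.1 hb) (hcb ▸ hTW hc)).elim
    refine (prob_present_absent h0 h1 X (Y T) (hXp.trans (filter_subset _ _)) hYp hdis).trans ?_
    rw [hX]
    refine mul_le_mul_of_nonneg_left ?_ (pow_nonneg h0 _)
    have hexp : 1 - p ≤ Real.exp (-p) := by
      have := Real.add_one_le_exp (-p)
      linarith
    refine (pow_le_pow_left₀ (by linarith) hexp _).trans ?_
    rw [← Real.exp_nat_mul, ← Real.exp_nat_mul, Real.exp_le_exp, hYcard, Nat.cast_mul,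
      Nat.cast_sub (by omega)]
    have hTr : (u : ℝ) ≤ (J + 1) * T.card := by exact_mod_cast hT
    have hWr : 2 * (u : ℝ) ≤ n := by exact_mod_cast hW
    have hkey : (u : ℝ) * (n / (2 * (J + 1))) ≤ T.card * (n - u) := by
      calc (u : ℝ) * (n / (2 * (J + 1))) ≤ ((J + 1) * T.card) * (n / (2 * (J + 1))) := by gcongr
        _ = T.card * (n / 2) := by field_simp
        _ ≤ _ := by gcongr; linarith
    have := mul_le_mul_of_nonneg_right hkey h0
    have h2 : (u : ℝ) * (n * p / (2 * (J + 1))) = u * (n / (2 * (J + 1))) * p := by ring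
    linarith
  refine (prob_union h0 h1 I _
    (fun i => {G | i.2 ⊆ edges G ∧ Disjoint (Y i.1) (edges G)}) ?_).trans
    ((sum_le_card_nsmul _ _ _ hterm).trans ?_)
  · rintro G ⟨T, hTW, hT, hin, hno⟩
    obtain ⟨X, hX, hXu⟩ := exists_subset_card_eq hin
    refine ⟨⟨T, X⟩, mem_filter.2 ⟨mem_product.2 ⟨mem_powerset.2 hTW, mem_powersetCard.2
      ⟨fun e he => ?_, hXu⟩⟩, hT⟩, fun e he => (mem_filter.1 (hX he)).1, ?_⟩
    · have := mem_filter.1 (hX he)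
      exact mem_filter.2 ⟨edges_subset G this.1, this.2⟩
    · rw [disjoint_left]
      intro e he he'
      obtain ⟨q, hq, rfl⟩ := mem_image.1 he
      obtain ⟨hq1, hq2⟩ := mem_product.1 hq
      exact hno _ hq1 _ (mem_compl.1 hq2) (mem_edges.1 he')
  · rw [nsmul_eq_mul]
    refine (mul_le_mul_of_nonneg_right hI (by positivity)).trans (le_of_eq ?_)
    simp only [mul_pow]
    ring

lemma prob_nearlyIsolated {n : ℕ} {p : ℝ} (h0 : 0 ≤ p) (h1 : p ≤ 1) (J : ℕ) (z : ℝ)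
    (hz : z = 2 * Real.exp 1 ^ 2 * (n * p * Real.exp (-(n * p / (2 * (J + 1))))))
    (hz2 : z ≤ 1 / 2) :
    gnpProb n p {G | NearlyIsolated J G} ≤ 2 * z := by
  set y := Real.exp (-(n * p / (2 * (J + 1)))) with hy
  have hy0 : 0 ≤ y := Real.exp_nonneg _
  have hz0 : 0 ≤ z := by rw [hz]; positivity
  let g : ℕ → ℝ := fun u => if u = 0 then 0 else (2 * Real.exp 1 * u * p * y) ^ u
  have hg : ∀ u, 0 ≤ g u := fun u => by simp only [g]; split_ifs <;> positivity
  let I : Finset (Finset (Fin n)) := univ.filter fun W => W.Nonempty ∧ 2 * W.card ≤ n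
  have hstep : gnpProb n p {G | NearlyIsolated J G} ≤ ∑ W ∈ I, g W.card := by
    refine (prob_union h0 h1 I _ (fun W => {G | ∃ T ⊆ W, W.card ≤ (J + 1) * T.card ∧
      W.card ≤ (inner G W).card ∧ ∀ x ∈ T, ∀ y ∉ W, ¬ G.Adj x y}) ?_).trans (sum_le_sum ?_)
    · rintro G ⟨T, W, hTW, hTne, hT, hW, hin, hno⟩
      exact ⟨W, mem_filter.2 ⟨mem_univ _, hTne.mono hTW, hW⟩, T, hTW, hT, hin, hno⟩
    · intro W hW
      obtain ⟨-, hne, hWn⟩ := mem_filter.1 hW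
      simp only [g]
      rw [if_neg hne.card_pos.ne']
      exact prob_nearlyIsolated_single h0 h1 J W hWn
  have hsum : ∑ W ∈ I, g W.card ≤ ∑ u ∈ range (n + 1), (n.choose u : ℝ) * g u := by
    refine (sum_le_sum_of_subset_of_nonneg (filter_subset _ _) fun W _ _ => hg _).trans
      (le_of_eq ?_)
    have := sum_powerset_apply_card g (x := (univ : Finset (Fin n)))
    simpa using this
  have hterm : ∀ u ∈ range n, (n.choose (u + 1) : ℝ) * g (u + 1) ≤ z ^ (u + 1) := by
    intro u _
    simp only [g]
    rw [if_neg (Nat.succ_ne_zero u)]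
    set v := u + 1
    have h2 : (n.choose v : ℝ) ≤ (n : ℝ) ^ v / v.factorial := Nat.choose_le_pow_div v n
    have h3 := Real.pow_div_factorial_le_exp (v : ℝ) (Nat.cast_nonneg v) v
    have he : Real.exp v = Real.exp 1 ^ v := by rw [← Real.exp_nat_mul, mul_one]
    rw [he] at h3
    calc (n.choose v : ℝ) * (2 * Real.exp 1 * v * p * y) ^ v
        ≤ (n : ℝ) ^ v / v.factorial * (2 * Real.exp 1 * v * p * y) ^ v := by gcongr
      _ = (n * (2 * Real.exp 1 * p * y)) ^ v * ((v : ℝ) ^ v / v.factorial) := by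
        simp only [mul_pow]; ring
      _ ≤ (n * (2 * Real.exp 1 * p * y)) ^ v * Real.exp 1 ^ v := by gcongr
      _ = z ^ v := by rw [hz, ← mul_pow]; congr 1; ring
  refine hstep.trans (hsum.trans ?_)
  rw [sum_range_succ']
  have hg0 : g 0 = 0 := by simp [g]
  rw [hg0, mul_zero, add_zero]
  refine (sum_le_sum hterm).trans ?_
  have h4 : ∑ u ∈ range n, z ^ (u + 1) = z * ∑ u ∈ range n, z ^ u := by
    rw [mul_sum]; exact sum_congr rfl fun u _ => pow_succ' z u
  have h5 := mul_neg_geom_sum z n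
  have h6 : 0 ≤ z ^ n := pow_nonneg hz0 n
  have h7 : 0 ≤ ∑ u ∈ range n, z ^ u := sum_nonneg fun u _ => pow_nonneg hz0 u
  have h8 : ∑ u ∈ range n, z ^ u ≤ 2 := by nlinarith
  rw [h4]
  nlinarith

/-! ### Rigidity of the 2-core with high probability -/

/-- A nontrivial automorphism of the 2-core is at most as likely as the four bad events together. -/
lemma prob_not_rigid {n : ℕ} {p : ℝ} (h0 : 0 ≤ p) (h1 : p ≤ 1) (J : ℕ) :
    gnpProb n p {G : SimpleGraph (Fin n) |
      ∀ f : G.induce (twoCore G) ≃g G.induce (twoCore G), ∀ v, f v = v}ᶜ ≤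
    gnpProb n p {G | ManyCommon J G} + gnpProb n p {G | NearlyIsolated J G} +
      gnpProb n p {G | SparseSet J (3 * J + 1) G} + gnpProb n p {G | SymmetricEdges (J * n) G} := by
  refine (prob_union h0 h1 (univ : Finset (Fin 4)) _ ![{G | ManyCommon J G},
    {G | NearlyIsolated J G}, {G | SparseSet J (3 * J + 1) G}, {G | SymmetricEdges (J * n) G}]
    ?_).trans (le_of_eq ?_)
  · intro G hG
    rcases bad_of_not_rigid G J hG with h | h | h | h
    · exact ⟨0, mem_univ _, h⟩
    · exact ⟨1, mem_univ _, h⟩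
    · exact ⟨2, mem_univ _, h⟩
    · exact ⟨3, mem_univ _, h⟩
  · rw [Fin.sum_univ_four]; rfl

/-- The only use of the upper bound on `p`: the expected codegree `n * p ^ 2` is polynomially
small, so that a bounded power of it beats `n ^ 3`. -/
lemma codegree_pow {n J : ℕ} {ε p : ℝ} (hn : 1 ≤ n) (h0 : 0 ≤ p) (hJ : 3 ≤ 2 * ε * J)
    (hp : p ≤ (n : ℝ) ^ (-(1 / 2 : ℝ) - ε)) : (n : ℝ) ^ 3 * (n * p ^ 2) ^ J ≤ 1 := by
  have hnr : (1 : ℝ) ≤ n := by exact_mod_cast hn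
  have hn0 : (0 : ℝ) < n := by linarith
  have hq : (n : ℝ) * p ^ 2 ≤ (n : ℝ) ^ (-(2 * ε)) := by
    calc (n : ℝ) * p ^ 2 ≤ n * ((n : ℝ) ^ (-(1 / 2 : ℝ) - ε)) ^ 2 := by gcongr
      _ = (n : ℝ) ^ (-(2 * ε)) := by
        rw [← Real.rpow_natCast ((n : ℝ) ^ _), ← Real.rpow_mul hn0.le]
        nth_rewrite 1 [← Real.rpow_one (n : ℝ)]
        rw [← Real.rpow_add hn0]
        congr 1; push_cast; ring
  calc (n : ℝ) ^ 3 * (n * p ^ 2) ^ J ≤ (n : ℝ) ^ 3 * ((n : ℝ) ^ (-(2 * ε))) ^ J := by gcongr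
    _ = (n : ℝ) ^ (3 - 2 * ε * J) := by
      rw [← Real.rpow_natCast ((n : ℝ) ^ _), ← Real.rpow_mul hn0.le, ← Real.rpow_natCast (n : ℝ) 3,
        ← Real.rpow_add hn0]
      congr 1; push_cast; ring
    _ ≤ 1 := Real.rpow_le_one_of_one_le_of_nonpos hnr (by linarith)

end TwoCoreRigid

open TwoCoreRigid in
/-- If `n·p(n) → ∞` and `p(n) ≤ n^{-1/2-ε}`, then whp the subgraph of a `G(n,p)` graph
induced on its 2-core has only the identity automorphism. -/
theorem twoCore_rigid_whp (ε : ℝ) (hε : 0 < ε) (p : ℕ → ℝ)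
    (hp0 : ∀ n, 0 ≤ p n) (hp1 : ∀ n, p n ≤ 1)
    (hgrow : Filter.Tendsto (fun n : ℕ => (n : ℝ) * p n) Filter.atTop Filter.atTop)
    (hupper : ∀ᶠ n : ℕ in Filter.atTop, p n ≤ (n : ℝ) ^ (-(1 / 2 : ℝ) - ε)) :
    Filter.Tendsto
      (fun n : ℕ => gnpProb n (p n)
        {G : SimpleGraph (Fin n) |
          ∀ f : G.induce (twoCore G) ≃g G.induce (twoCore G), ∀ v, f v = v})
      Filter.atTop (nhds 1) := by
  obtain ⟨J, hJ⟩ : ∃ J : ℕ, 3 ≤ 2 * ε * J := by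
    obtain ⟨J, hJ⟩ := exists_nat_ge (3 / (2 * ε))
    refine ⟨J, ?_⟩
    rw [div_le_iff₀ (by positivity)] at hJ
    linarith
  set z : ℕ → ℝ := fun n => 2 * Real.exp 1 ^ 2 * (n * p n * Real.exp (-(n * p n / (2 * (J + 1)))))
    with hz
  have hz0 : Filter.Tendsto z Filter.atTop (nhds 0) := by
    have hc : (0 : ℝ) < 2 * (J + 1) := by positivity
    have h1 := (Real.tendsto_pow_mul_exp_neg_atTop_nhds_zero 1).comp (hgrow.atTop_div_const hc)
    have h2 := h1.const_mul (2 * Real.exp 1 ^ 2 * (2 * (J + 1)))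
    rw [mul_zero] at h2
    refine h2.congr fun n => ?_
    simp only [Function.comp, pow_one, hz]
    field_simp
  have hbound : ∀ᶠ n : ℕ in Filter.atTop, gnpProb n (p n) {G : SimpleGraph (Fin n) |
      ∀ f : G.induce (twoCore G) ≃g G.induce (twoCore G), ∀ v, f v = v}ᶜ ≤
      1 / (n : ℝ) + 2 * z n + Real.exp (-(n : ℝ)) + 1 / (n : ℝ) := by
    filter_upwards [hupper, hz0.eventually_le_const (by norm_num : (0 : ℝ) < 1 / 2),
      hgrow.eventually_ge_atTop ((3 * J + 3) * (128 * (J + 1) ^ 2)),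
      Filter.eventually_gt_atTop (4 * (J + 1))] with n hpn hzn hgn hn
    have hn3 : (3 : ℝ) ≤ n := by
      have : 3 ≤ n := by omega
      exact_mod_cast this
    have hn0 : (0 : ℝ) < n := by linarith
    have hq := codegree_pow (by omega) (hp0 n) hJ hpn
    set q := ((n : ℝ) * p n ^ 2) ^ J with hqdef
    have hq0 : 0 ≤ q := by positivity
    refine (prob_not_rigid (hp0 n) (hp1 n) J).trans ?_
    gcongr ?_ + ?_ + ?_ + ?_
    · refine (prob_manyCommon (hp0 n) (hp1 n) J).trans ?_
      rw [le_div_iff₀ hn0]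
      linarith
    · exact prob_nearlyIsolated (hp0 n) (hp1 n) J (z n) rfl hzn
    · refine (prob_sparseSet (hp0 n) (hp1 n) J _ hn).trans (Real.exp_le_exp.2 ?_)
      have h1 : (3 * J + 3 : ℝ) ≤ n * p n / (128 * (J + 1) ^ 2) := by
        rwa [le_div_iff₀ (by positivity)]
      push_cast
      nlinarith
    · refine (prob_symmetricEdges (hp0 n) (hp1 n) J).trans ?_
      have he : Real.exp 1 ≤ n := (Real.exp_one_lt_d9.le.trans (by norm_num)).trans hn3
      have h2 : Real.exp 1 * n * q ≤ 1 / n := by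
        rw [le_div_iff₀ hn0]
        have : Real.exp 1 * (n ^ 2 * q) ≤ n * (n ^ 2 * q) := by gcongr
        linarith
      have h3 : 1 / (n : ℝ) ≤ 1 := by
        rw [div_le_one hn0]; linarith
      exact (pow_le_of_le_one (by positivity) (h2.trans h3) (by omega)).trans h2
  have hlim : Filter.Tendsto
      (fun n : ℕ => 1 / (n : ℝ) + 2 * z n + Real.exp (-(n : ℝ)) + 1 / (n : ℝ))
      Filter.atTop (nhds 0) := by
    have h1 : Filter.Tendsto (fun n : ℕ => 1 / (n : ℝ)) Filter.atTop (nhds 0) :=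
      tendsto_one_div_atTop_nhds_zero_nat
    have h2 : Filter.Tendsto (fun n : ℕ => Real.exp (-(n : ℝ))) Filter.atTop (nhds 0) :=
      Real.tendsto_exp_neg_atTop_nhds_zero.comp tendsto_natCast_atTop_atTop
    simpa using ((h1.add (hz0.const_mul 2)).add h2).add h1
  have hbad := squeeze_zero' (Filter.Eventually.of_forall fun n => prob_nonneg (hp0 n) (hp1 n) _)
    hbound hlim
  have := hbad.const_sub 1
  rw [sub_zero] at this
  exact this.congr fun n => (prob_compl (p n) _).symm
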